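/- arXiv:2405.02405 — 4 statements merged into one kernel-verified Lean document; each statement's English description precedes it below -/
import Mathlib

section
/- Let f, g ∈ H²(𝔻²) with f(0) ≠ 0 and g(0) ≠ 0, and let n ≥ 0. If ⟨χ_j f, χ_k f⟩ = ⟨χ_j g, χ_k g⟩ for all 0 ≤ j, k ≤ n, then there exists a complex constant c such that p_n*[f] = c · p_n*[g]. -/
noncomputable section

open Finset

/-- Coefficients of a formal power series in two variables `z, w`
(the coefficient of `z^j w^k` is the value at `(j, k)`). -/
abbrev Coef := ℕ × ℕ → ℂ

/-- Coefficients of a formal power series in one variable. -/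
abbrev Coef1 := ℕ → ℂ

/-- Membership in the Hardy space `H²(𝔻²)`: square-summable coefficients. -/
def MemH2 (f : Coef) : Prop := Summable (fun jk : ℕ × ℕ => ‖f jk‖ ^ 2)

/-- Membership in the Hardy space `H²(𝔻)`. -/
def MemH2₁ (f : Coef1) : Prop := Summable (fun j : ℕ => ‖f j‖ ^ 2)

/-- The `H²(𝔻²)` inner product `⟨f, g⟩ = ∑ a_{jk} conj (b_{jk})`. -/
def Hinner (f g : Coef) : ℂ := ∑' jk : ℕ × ℕ, f jk * (starRingEnd ℂ) (g jk)

/-- The `H²(𝔻²)` norm. -/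
def Hnorm (f : Coef) : ℝ := Real.sqrt (∑' jk : ℕ × ℕ, ‖f jk‖ ^ 2)

/-- The `H²(𝔻)` norm. -/
def Hnorm1 (f : Coef1) : ℝ := Real.sqrt (∑' j : ℕ, ‖f j‖ ^ 2)

/-- The constant function `1` as an element of `H²(𝔻²)`. -/
def oneH : Coef := fun jk => if jk = (0, 0) then 1 else 0

/-- The constant function `1` as an element of `H²(𝔻)`. -/
def oneH1 : Coef1 := fun j => if j = 0 then 1 else 0

/-- Cauchy product `q·f` of two formal power series in two variables
(used for multiplication of `f ∈ H²(𝔻²)` by a polynomial `q`). -/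
def pmul (q f : Coef) : Coef := fun jk =>
  ∑ a ∈ range (jk.1 + 1), ∑ b ∈ range (jk.2 + 1), q (a, b) * f (jk.1 - a, jk.2 - b)

/-- Multiplication of a one-variable power series by a one-variable polynomial. -/
def pmul1 (q : Polynomial ℂ) (f : Coef1) : Coef1 := fun j =>
  ∑ a ∈ range (j + 1), q.coeff a * f (j - a)

/-- Degree-lexicographic enumeration of the monomials in `z, w`:
`chi 0 = (0,0) ↔ 1`, `chi 1 = (1,0) ↔ z`, `chi 2 = (0,1) ↔ w`,
`chi 3 = (2,0) ↔ z²`, `chi 4 = (1,1) ↔ zw`, `chi 5 = (0,2) ↔ w²`, … -/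
def chi : ℕ → ℕ × ℕ
  | 0 => (0, 0)
  | n + 1 =>
    let p := chi n
    if p.1 = 0 then (p.2 + 1, 0) else (p.1 - 1, p.2 + 1)

/-- The monomial `z^(ab.1) w^(ab.2)` as a coefficient function. -/
def mono (ab : ℕ × ℕ) : Coef := fun jk => if jk = ab then 1 else 0

/-- `p` lies in `P_n = span {χ_0, …, χ_n}`. -/
def inPn (n : ℕ) (p : Coef) : Prop := ∀ ab, p ab ≠ 0 → ∃ k ≤ n, chi k = ab

/-- `p` is a (two-variable) polynomial: finitely many nonzero coefficients. -/
def IsPoly2 (p : Coef) : Prop := (Function.support p).Finite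

/-- Evaluation of a power series at the point `(z, w)`
(absolutely convergent for `f ∈ H²(𝔻²)` and `(z,w)` in the open bidisk,
and for any polynomial at any point). -/
def heval (f : Coef) (z w : ℂ) : ℂ := ∑' jk : ℕ × ℕ, f jk * z ^ jk.1 * w ^ jk.2

/-- `p` is the `n`-th optimal polynomial approximant to `1/f`:
`p ∈ P_n` and `p` minimizes `‖qf - 1‖` over `q ∈ P_n`. -/
def IsOPA (f : Coef) (n : ℕ) (p : Coef) : Prop :=
  inPn n p ∧ ∀ q : Coef, inPn n q →
    Hnorm (pmul p f - oneH) ≤ Hnorm (pmul q f - oneH)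

/-- `q` has bidegree `(N, M)`: degree `N` in `z` and degree `M` in `w`. -/
def HasBidegree (q : Coef) (N M : ℕ) : Prop :=
  (∀ a b : ℕ, q (a, b) ≠ 0 → a ≤ N ∧ b ≤ M) ∧ (∃ b, q (N, b) ≠ 0) ∧ (∃ a, q (a, M) ≠ 0)

/-- Reflection of a polynomial of bidegree `(N, M)`:
the coefficient of `z^j w^k` is `conj` of the coefficient of `z^(N-j) w^(M-k)`. -/
def reflPoly (N M : ℕ) (q : Coef) : Coef := fun jk =>
  if jk.1 ≤ N ∧ jk.2 ≤ M then (starRingEnd ℂ) (q (N - jk.1, M - jk.2)) else 0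

/-- The degree-lexicographic index of the monomial `z^(ab.1) w^(ab.2)`
(the inverse of `chi`). -/
def lexIndex (ab : ℕ × ℕ) : ℕ := (ab.1 + ab.2) * (ab.1 + ab.2 + 1) / 2 + ab.2

/-- `pound k j` = the degree-lexicographic index `£(k,j)` of the monomial `(χ_k)^j`. -/
def pound (k j : ℕ) : ℕ := lexIndex (j * (chi k).1, j * (chi k).2)

/-- The linear factor `z - α` as a coefficient function. -/
def linZ (α : ℂ) : Coef := fun jk => if jk = (1, 0) then 1 else if jk = (0, 0) then -α else 0

/-- The linear factor `w - β` as a coefficient function. -/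
def linW (β : ℂ) : Coef := fun jk => if jk = (0, 1) then 1 else if jk = (0, 0) then -β else 0

lemma aux_mono_apply (ab : ℕ × ℕ) (f : Coef) (jk : ℕ × ℕ) :
    pmul (mono ab) f jk =
      if ab.1 ≤ jk.1 ∧ ab.2 ≤ jk.2 then f (jk.1 - ab.1, jk.2 - ab.2) else 0 := by
  obtain ⟨a, b⟩ := ab
  obtain ⟨j, k⟩ := jk
  simp only [pmul, mono, Prod.mk.injEq, ite_mul, one_mul, zero_mul]
  have h1 : ∀ x ∈ range (j + 1), (∑ y ∈ range (k + 1),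
      if x = a ∧ y = b then f (j - x, k - y) else 0) =
      if x = a then (if b ≤ k then f (j - a, k - b) else 0) else 0 := by
    intro x _
    by_cases hx : x = a
    · subst hx
      simp [Nat.lt_succ_iff]
    · simp [hx]
  rw [Finset.sum_congr rfl h1, Finset.sum_ite_eq']
  simp only [mem_range, Nat.lt_succ_iff]
  split_ifs <;> simp_all

lemma aux_mono_mem (ab : ℕ × ℕ) (f : Coef) (hf : MemH2 f) : MemH2 (pmul (mono ab) f) := by
  have hinj : Function.Injective (fun jk : ℕ × ℕ => jk + ab) := add_left_injective ab
  unfold MemH2 at *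
  rw [← hinj.summable_iff]
  · refine hf.congr ?_
    intro jk
    simp [aux_mono_apply]
  · intro jk hjk
    rw [aux_mono_apply, if_neg]
    · simp
    · rintro ⟨h1, h2⟩
      apply hjk
      exact ⟨(jk.1 - ab.1, jk.2 - ab.2), by ext <;> simp <;> omega⟩

abbrev AuxH := lp (fun _ : ℕ × ℕ => ℂ) 2

lemma aux_memlp {f : Coef} (hf : MemH2 f) : Memℓp (E := fun _ : ℕ × ℕ => ℂ) f 2 := by
  apply memℓp_gen
  simpa [MemH2] using hf

def auxM (f : Coef) (hf : MemH2 f) (ab : ℕ × ℕ) : AuxH :=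
  ⟨pmul (mono ab) f, aux_memlp (aux_mono_mem ab f hf)⟩

def auxS (n : ℕ) : Finset (ℕ × ℕ) := (range (n + 1)).image chi

lemma aux_mem_S {n : ℕ} {ab : ℕ × ℕ} : ab ∈ auxS n ↔ ∃ k ≤ n, chi k = ab := by
  simp [auxS, Nat.lt_succ_iff]

def auxL (f : Coef) (hf : MemH2 f) (n : ℕ) : Coef →ₗ[ℂ] AuxH where
  toFun p := ∑ ab ∈ auxS n, p ab • auxM f hf ab
  map_add' p q := by simp [add_smul, Finset.sum_add_distrib]
  map_smul' c p := by simp [Finset.smul_sum, mul_smul]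

lemma aux_pmul_sum (f : Coef) (n : ℕ) (p : Coef) (hp : inPn n p) (jk : ℕ × ℕ) :
    pmul p f jk = ∑ ab ∈ auxS n, p ab * pmul (mono ab) f jk := by
  have hp' : ∀ ab, p ab = ∑ cd ∈ auxS n, p cd * mono cd ab := by
    intro ab
    simp only [mono, mul_ite, mul_one, mul_zero, Finset.sum_ite_eq]
    split_ifs with h
    · rfl
    · by_contra h0
      exact h (aux_mem_S.2 (hp ab h0))
  simp only [pmul, Finset.mul_sum]
  conv_rhs => rw [Finset.sum_comm]
  refine Finset.sum_congr rfl fun a _ => ?_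
  conv_rhs => rw [Finset.sum_comm]
  refine Finset.sum_congr rfl fun b _ => ?_
  conv_lhs => rw [hp' (a, b)]
  rw [Finset.sum_mul]
  simp [mul_assoc]

lemma auxL_coe (f : Coef) (hf : MemH2 f) (n : ℕ) (p : Coef) (hp : inPn n p) :
    (auxL f hf n p : Coef) = pmul p f := by
  funext jk
  rw [aux_pmul_sum f n p hp]
  simp [auxL, auxM]
  exact Finset.sum_apply jk _ _

def auxE : AuxH := lp.single 2 (0, 0) 1

lemma auxE_coe : (auxE : Coef) = oneH := by
  funext jk
  by_cases h : jk = (0, 0)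
  · subst h; simp [auxE, oneH]
  · simp [auxE, oneH, h]

lemma aux_norm (x : AuxH) : ‖x‖ = Hnorm (x : Coef) := by
  rw [lp.norm_eq_tsum_rpow (by norm_num), Hnorm, Real.sqrt_eq_rpow]
  simp

lemma aux_inner (x y : AuxH) : inner ℂ x y = Hinner (y : Coef) (x : Coef) := by
  rw [lp.inner_eq_tsum, Hinner]
  rfl

lemma aux_restrict (f : Coef) (hf : MemH2 f) (n : ℕ) (p : Coef) :
    ∃ q, inPn n q ∧ auxL f hf n q = auxL f hf n p := by
  refine ⟨fun ab => if ab ∈ auxS n then p ab else 0, ?_, ?_⟩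
  · intro ab h
    apply aux_mem_S.1
    by_contra h'
    simp [h'] at h
  · simp only [auxL, LinearMap.coe_mk, AddHom.coe_mk]
    exact Finset.sum_congr rfl fun ab h => by simp [h]

lemma aux_opa (f : Coef) (hf : MemH2 f) (n : ℕ) (p : Coef) (hp : IsOPA f n p) (r : Coef) :
    inner ℂ (auxL f hf n r) (auxL f hf n p) = inner ℂ (auxL f hf n r) auxE := by
  have hn : ∀ q, inPn n q → Hnorm (pmul q f - oneH) = ‖auxE - auxL f hf n q‖ := by
    intro q hq
    rw [norm_sub_rev, aux_norm, lp.coeFn_sub, auxL_coe f hf n q hq, auxE_coe]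
  have key := (Submodule.norm_eq_iInf_iff_inner_eq_zero (LinearMap.range (auxL f hf n))
    (u := auxE) (v := auxL f hf n p) ⟨p, rfl⟩).1 ?_ (auxL f hf n r) ⟨r, rfl⟩
  · rw [inner_eq_zero_symm, inner_sub_right, sub_eq_zero] at key
    exact key.symm
  · apply le_antisymm
    · apply le_ciInf
      rintro ⟨_, q, rfl⟩
      obtain ⟨q', hq', he⟩ := aux_restrict f hf n q
      have := hp.2 q' hq'
      rw [hn p hp.1, hn q' hq', he] at this
      exact this
    · exact ciInf_le ⟨0, by rintro _ ⟨w, rfl⟩; exact norm_nonneg _⟩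
        (⟨auxL f hf n p, p, rfl⟩ : LinearMap.range (auxL f hf n))

lemma aux_innerE (f : Coef) (hf : MemH2 f) (n : ℕ) (r : Coef) (hr : inPn n r) :
    inner ℂ (auxL f hf n r) auxE = (starRingEnd ℂ) (r (0, 0) * f (0, 0)) := by
  rw [auxE, lp.inner_single_right, auxL_coe f hf n r hr]
  simp [pmul]

lemma aux_nzd (f : Coef) (hf0 : f (0, 0) ≠ 0) (r : Coef) (h : ∀ jk, pmul r f jk = 0) :
    ∀ N a b, a + b = N → r (a, b) = 0 := by
  intro N
  induction N using Nat.strong_induction_on with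
  | _ N ih =>
    intro a b hab
    have h1 := h (a, b)
    simp only [pmul] at h1
    rw [Finset.sum_eq_single_of_mem a (by simp), Finset.sum_eq_single_of_mem b (by simp)] at h1
    · simpa [hf0] using h1
    · intro y hy hyb
      have : y < b + 1 := by simpa using hy
      rw [ih (a + y) (by omega) a y rfl, zero_mul]
    · intro x hx hxa
      have : x < a + 1 := by simpa using hx
      refine Finset.sum_eq_zero fun y hy => ?_
      have : y < b + 1 := by simpa using hy
      rw [ih (x + y) (by omega) x y rfl, zero_mul]

/-- If `f, g ∈ H²(𝔻²)` are nonzero at the origin and have the same Gram data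
`⟨χ_j f, χ_k f⟩ = ⟨χ_j g, χ_k g⟩` for `0 ≤ j, k ≤ n`, then `p_n*[f] = c · p_n*[g]` for some
constant `c`. -/
theorem statement3 (f g : Coef) (hf : MemH2 f) (hg : MemH2 g)
    (hf0 : f (0, 0) ≠ 0) (hg0 : g (0, 0) ≠ 0) (n : ℕ)
    (hGram : ∀ j ≤ n, ∀ k ≤ n,
      Hinner (pmul (mono (chi j)) f) (pmul (mono (chi k)) f) =
        Hinner (pmul (mono (chi j)) g) (pmul (mono (chi k)) g))
    (p q : Coef) (hp : IsOPA f n p) (hq : IsOPA g n q) :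
    ∃ c : ℂ, p = c • q := by
  have hG : ∀ u v : Coef, inner ℂ (auxL f hf n u) (auxL f hf n v) =
      inner ℂ (auxL g hg n u) (auxL g hg n v) := by
    intro u v
    simp only [auxL, LinearMap.coe_mk, AddHom.coe_mk, sum_inner, inner_sum, inner_smul_left,
      inner_smul_right]
    refine Finset.sum_congr rfl fun b hb => ?_
    congr 1
    refine Finset.sum_congr rfl fun a ha => ?_
    obtain ⟨j, hj, rfl⟩ := aux_mem_S.1 ha
    obtain ⟨k, hk, rfl⟩ := aux_mem_S.1 hb
    have : inner ℂ (auxM f hf (chi j)) (auxM f hf (chi k)) =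
        inner ℂ (auxM g hg (chi j)) (auxM g hg (chi k)) := by
      rw [aux_inner, aux_inner]
      first
        | exact hGram k hk j hj
        | exact hGram j hj k hk
    rw [this]
  set c : ℂ := (starRingEnd ℂ) (f (0, 0)) / (starRingEnd ℂ) (g (0, 0)) with hc
  have hg0' : (starRingEnd ℂ) (g (0, 0)) ≠ 0 := by simpa using hg0
  refine ⟨c, ?_⟩
  have hr : inPn n (p - c • q) := by
    intro ab hab
    by_contra hcon
    have h1 : p ab = 0 := by
      by_contra h; exact hcon (hp.1 ab h)
    have h2 : q ab = 0 := by
      by_contra h; exact hcon (hq.1 ab h)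
    simp [h1, h2] at hab
  have hz : inner ℂ (auxL f hf n (p - c • q)) (auxL f hf n (p - c • q)) = 0 := by
    conv_lhs => rw [map_sub (auxL f hf n) p, map_smul, inner_sub_right, inner_smul_right]
    rw [← map_smul, ← map_sub, hG _ q, aux_opa f hf n p hp, aux_opa g hg n q hq,
      aux_innerE f hf n _ hr, aux_innerE g hg n _ hr, map_mul, map_mul, hc]
    field_simp
    ring
  have hz' := inner_self_eq_zero.1 hz
  have hz2 : ∀ jk, pmul (p - c • q) f jk = 0 := by
    intro jk
    rw [← auxL_coe f hf n _ hr, hz']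
    rfl
  funext ⟨a, b⟩
  have := aux_nzd f hf0 _ hz2 _ a b rfl
  exact sub_eq_zero.1 this
end
end

section
/- Let θ, f̃ ∈ H²(𝔻²), and suppose θ acts as an isometric multiplier on H²(𝔻²). Let f = θ·f̃ and suppose f(0) ≠ 0. Then for every n ≥ 0 there exists a complex constant c such that p_n*[f] = c · p_n*[f̃]. -/
noncomputable section

open Finset

/-- Squared norm. -/
def Hsq (u : Coef) : ℝ := ∑' jk : ℕ × ℕ, ‖u jk‖ ^ 2

/-- Iterated power series attached to a coefficient function. -/
def toPS (f : Coef) : PowerSeries (PowerSeries ℂ) :=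
  PowerSeries.mk fun j => PowerSeries.mk fun k => f (j, k)

lemma toPS_inj {f g : Coef} (h : toPS f = toPS g) : f = g := by
  ext ⟨j, k⟩
  have := congrArg (fun F => PowerSeries.coeff k (PowerSeries.coeff j F)) h
  simpa [toPS] using this

lemma toPS_pmul (f g : Coef) : toPS (pmul f g) = toPS f * toPS g := by
  ext j k
  rw [PowerSeries.coeff_mul, Finset.Nat.sum_antidiagonal_eq_sum_range_succ_mk, map_sum]
  simp only [PowerSeries.coeff_mul, Finset.Nat.sum_antidiagonal_eq_sum_range_succ_mk]
  simp [toPS, pmul]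

lemma pmul_left_comm' (p θ f : Coef) : pmul p (pmul θ f) = pmul θ (pmul p f) := by
  apply toPS_inj
  simp only [toPS_pmul]
  ring

lemma pmul_cancel {p q f : Coef} (hf : f ≠ 0) (h : pmul p f = pmul q f) : p = q := by
  apply toPS_inj
  have h2 : toPS p * toPS f = toPS q * toPS f := by rw [← toPS_pmul, ← toPS_pmul, h]
  refine mul_right_cancel₀ ?_ h2
  intro h0
  apply hf
  apply toPS_inj
  rw [h0]
  ext j k
  simp [toPS]

lemma pmul_smul' (c : ℂ) (p f : Coef) : pmul (c • p) f = c • pmul p f := by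
  ext jk
  simp [pmul, Finset.mul_sum, mul_assoc]

lemma pmul_half (p q f : Coef) :
    pmul ((1 / 2 : ℂ) • (p + q)) f = (1 / 2 : ℂ) • (pmul p f + pmul q f) := by
  rw [pmul_smul']
  congr 1
  ext jk
  simp [pmul, add_mul, Finset.sum_add_distrib]

lemma MemH2.add' {u v : Coef} (hu : MemH2 u) (hv : MemH2 v) : MemH2 (u + v) := by
  refine Summable.of_nonneg_of_le (fun _ => by positivity) (fun jk => ?_)
    ((hu.mul_left 2).add (hv.mul_left 2))
  have h := norm_add_le (u jk) (v jk)
  have h0 := norm_nonneg (u jk + v jk)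
  simp only [Pi.add_apply]
  nlinarith [sq_nonneg (‖u jk‖ - ‖v jk‖)]

lemma MemH2.smul' (c : ℂ) {u : Coef} (hu : MemH2 u) : MemH2 (c • u) := by
  refine (hu.mul_left (‖c‖ ^ 2)).congr (fun jk => ?_)
  simp [mul_pow]

lemma Hsq_smul (c : ℂ) (u : Coef) : Hsq (c • u) = ‖c‖ ^ 2 * Hsq u := by
  simp [Hsq, mul_pow, tsum_mul_left]

lemma MemH2.sum' {ι : Type*} (s : Finset ι) (u : ι → Coef) (h : ∀ i ∈ s, MemH2 (u i)) :
    MemH2 (∑ i ∈ s, u i) := by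
  classical
  induction s using Finset.induction_on with
  | empty => simp [MemH2, summable_zero]
  | insert a s ha ih =>
    rw [Finset.sum_insert ha]
    exact (h a (by simp)).add' (ih fun i hi => h i (by simp [hi]))

/-- Shift of a coefficient function. -/
def shiftC (ab : ℕ × ℕ) (f : Coef) : Coef := fun jk =>
  if ab.1 ≤ jk.1 ∧ ab.2 ≤ jk.2 then f (jk.1 - ab.1, jk.2 - ab.2) else 0

lemma MemH2.shift (ab : ℕ × ℕ) {f : Coef} (hf : MemH2 f) : MemH2 (shiftC ab f) := by
  have hinj : Function.Injective (fun jk : ℕ × ℕ => (jk.1 + ab.1, jk.2 + ab.2)) := by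
    rintro ⟨a, b⟩ ⟨c, d⟩ h
    simpa using h
  unfold MemH2
  rw [← hinj.summable_iff]
  · refine hf.congr fun jk => ?_
    simp [shiftC]
  · rintro ⟨j, k⟩ h
    have : ¬ (ab.1 ≤ j ∧ ab.2 ≤ k) := by
      rintro ⟨h1, h2⟩
      exact h ⟨(j - ab.1, k - ab.2), by simp [h1, h2]⟩
    simp [shiftC, this]

lemma pmul_eq_sum (s : Finset (ℕ × ℕ)) (p f : Coef) (hs : ∀ ab, p ab ≠ 0 → ab ∈ s) :
    pmul p f = ∑ ab ∈ s, p ab • shiftC ab f := by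
  classical
  ext ⟨j, k⟩
  have h1 : pmul p f (j, k) = ∑ ab ∈ range (j + 1) ×ˢ range (k + 1), p ab * shiftC ab f (j, k) := by
    rw [Finset.sum_product]
    refine Finset.sum_congr rfl fun a ha => Finset.sum_congr rfl fun b hb => ?_
    have ha' : a ≤ j := by simpa [Nat.lt_succ_iff] using ha
    have hb' : b ≤ k := by simpa [Nat.lt_succ_iff] using hb
    simp [shiftC, ha', hb']
  rw [h1, Finset.sum_apply]
  simp only [Pi.smul_apply, smul_eq_mul]
  have h2 : ∑ ab ∈ range (j + 1) ×ˢ range (k + 1), p ab * shiftC ab f (j, k)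
      = ∑ ab ∈ (range (j + 1) ×ˢ range (k + 1)) ∪ s, p ab * shiftC ab f (j, k) := by
    refine Finset.sum_subset Finset.subset_union_left fun ab _ h => ?_
    have : ¬ (ab.1 ≤ j ∧ ab.2 ≤ k) := by
      simpa [Finset.mem_product, Nat.lt_succ_iff] using h
    simp [shiftC, this]
  have h3 : ∑ ab ∈ s, p ab * shiftC ab f (j, k)
      = ∑ ab ∈ (range (j + 1) ×ˢ range (k + 1)) ∪ s, p ab * shiftC ab f (j, k) := by
    refine Finset.sum_subset Finset.subset_union_right fun ab _ h => ?_
    have : p ab = 0 := by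
      by_contra h0
      exact h (hs ab h0)
    simp [this]
  rw [h2, h3]

lemma inPn.memH2 {n : ℕ} {p f : Coef} (hp : inPn n p) (hf : MemH2 f) : MemH2 (pmul p f) := by
  classical
  rw [pmul_eq_sum ((range (n + 1)).image chi) p f]
  · exact MemH2.sum' _ _ fun ab _ => (hf.shift ab).smul' _
  · intro ab h
    obtain ⟨k, hk, rfl⟩ := hp ab h
    exact Finset.mem_image_of_mem _ (by simpa [Nat.lt_succ_iff] using hk)

lemma inPn.smul' {n : ℕ} (c : ℂ) {p : Coef} (hp : inPn n p) : inPn n (c • p) := by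
  intro ab h
  apply hp
  rintro h0
  simp [h0] at h

lemma inPn.add' {n : ℕ} {p q : Coef} (hp : inPn n p) (hq : inPn n q) : inPn n (p + q) := by
  intro ab h
  by_cases h0 : p ab = 0
  · exact hq ab (by simpa [h0] using h)
  · exact hp ab h0

lemma memH2_oneH : MemH2 oneH := by
  refine summable_of_ne_finset_zero (s := {(0, 0)}) fun jk h => ?_
  have : jk ≠ (0, 0) := by simpa using h
  simp [oneH, this]

lemma MemH2.sub_one {u : Coef} (hu : MemH2 u) : MemH2 (u - oneH) := by
  have := hu.add' (memH2_oneH.smul' (-1))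
  simpa [sub_eq_add_neg] using this

lemma Hsq_sub_one {u : Coef} (hu : MemH2 u) :
    Hsq (u - oneH) = Hsq u + (1 - 2 * (u (0, 0)).re) := by
  have h : ∀ jk, ‖(u - oneH) jk‖ ^ 2
      = ‖u jk‖ ^ 2 + (if jk = (0, 0) then (1 - 2 * (u (0, 0)).re) else 0) := by
    intro jk
    by_cases h0 : jk = (0, 0)
    · subst h0
      simp [oneH, ← Complex.normSq_eq_norm_sq, Complex.normSq_apply]
      ring
    · simp [oneH, h0]
  unfold Hsq
  simp_rw [h]
  rw [Summable.tsum_add hu (summable_of_ne_finset_zero (s := {(0, 0)}) fun jk h => by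
    have : jk ≠ (0, 0) := by simpa using h
    simp [this]), tsum_ite_eq]

lemma Hsq_parallelogram {u v : Coef} (hu : MemH2 u) (hv : MemH2 v) :
    Hsq ((1 / 2 : ℂ) • (u + v)) + Hsq ((1 / 2 : ℂ) • (u + (-1 : ℂ) • v)) = (Hsq u + Hsq v) / 2 := by
  have h1 := (hu.add' hv).smul' (1 / 2)
  have h2 := (hu.add' (hv.smul' (-1))).smul' (1 / 2)
  unfold Hsq
  rw [← Summable.tsum_add h1 h2, ← Summable.tsum_add hu hv, ← tsum_div_const]
  refine tsum_congr fun jk => ?_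
  have h := parallelogram_law_with_norm ℝ (u jk) (v jk)
  simp [mul_pow, ← sub_eq_add_neg]
  linear_combination h / 4

lemma eq_zero_of_Hsq {u : Coef} (hu : MemH2 u) (h : Hsq u ≤ 0) : u = 0 := by
  have h0 : Hsq u = 0 := le_antisymm h (tsum_nonneg fun _ => by positivity)
  have hs : HasSum (fun jk : ℕ × ℕ => ‖u jk‖ ^ 2) 0 := by
    rw [← h0]
    exact Summable.hasSum hu
  have := (hasSum_zero_iff_of_nonneg (fun jk => by positivity)).1 hs
  ext jk
  simpa using congrFun this jk

lemma Hnorm_le_iff (u v : Coef) : Hnorm u ≤ Hnorm v ↔ Hsq u ≤ Hsq v :=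
  Real.sqrt_le_sqrt_iff (tsum_nonneg fun _ => by positivity)

lemma opa_unique {f : Coef} (hf : MemH2 f) (hf0 : f ≠ 0) {n : ℕ} {p q : Coef}
    (hp : IsOPA f n p) (hq : IsOPA f n q) : p = q := by
  have hu := (hp.1.memH2 hf).sub_one
  have hv := (hq.1.memH2 hf).sub_one
  have hpar := Hsq_parallelogram hu hv
  have h1 := (Hnorm_le_iff _ _).1 (hp.2 _ ((hp.1.add' hq.1).smul' (1 / 2)))
  have h2 := (Hnorm_le_iff _ _).1 (hq.2 _ ((hp.1.add' hq.1).smul' (1 / 2)))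
  have e : pmul ((1 / 2 : ℂ) • (p + q)) f - oneH
      = (1 / 2 : ℂ) • ((pmul p f - oneH) + (pmul q f - oneH)) := by
    rw [pmul_half]
    ext jk
    simp
    ring
  rw [e] at h1 h2
  have h3 := eq_zero_of_Hsq ((hu.add' (hv.smul' (-1))).smul' (1 / 2)) (by linarith)
  apply pmul_cancel hf0
  ext jk
  have h4 := congrFun h3 jk
  simp at h4
  linear_combination h4

lemma key (θ ftilde : Coef) (hft : MemH2 ftilde)
    (hiso : ∀ g : Coef, MemH2 g → MemH2 (pmul θ g) ∧ Hnorm (pmul θ g) = Hnorm g)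
    (n : ℕ) (s : Coef) (hs : inPn n s) :
    Hsq (pmul ((starRingEnd ℂ) (θ (0, 0)) • s) (pmul θ ftilde) - oneH)
      = ‖θ (0, 0)‖ ^ 2 * (Hsq (pmul s ftilde - oneH) - 1) + 1 := by
  have hm := hs.memH2 hft
  have hi := hiso _ hm
  have hsq : Hsq (pmul θ (pmul s ftilde)) = Hsq (pmul s ftilde) :=
    le_antisymm ((Hnorm_le_iff _ _).1 hi.2.le) ((Hnorm_le_iff _ _).1 hi.2.ge)
  rw [pmul_smul', pmul_left_comm', Hsq_sub_one (hi.1.smul' _), Hsq_sub_one hm, Hsq_smul, hsq]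
  have h0 : ((starRingEnd ℂ) (θ (0, 0)) • pmul θ (pmul s ftilde)) (0, 0)
      = ((‖θ (0, 0)‖ ^ 2 : ℝ) : ℂ) * pmul s ftilde (0, 0) := by
    rw [← Complex.normSq_eq_norm_sq, Complex.normSq_eq_conj_mul_self]
    simp [pmul]
    ring
  rw [h0, Complex.re_ofReal_mul, RCLike.norm_conj]
  ring

/-- If `θ ∈ H²(𝔻²)` acts as an isometric multiplier and `f = θ·f̃` with
`f(0) ≠ 0`, then for every `n` there is a constant `c` with `p_n*[f] = c · p_n*[f̃]`. -/
theorem statement4 (θ ftilde : Coef) (hθ : MemH2 θ) (hft : MemH2 ftilde)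
    (hiso : ∀ g : Coef, MemH2 g → MemH2 (pmul θ g) ∧ Hnorm (pmul θ g) = Hnorm g)
    (hf0 : pmul θ ftilde (0, 0) ≠ 0) (n : ℕ)
    (p q : Coef) (hp : IsOPA (pmul θ ftilde) n p) (hq : IsOPA ftilde n q) :
    ∃ c : ℂ, p = c • q := by
  have h00 : θ (0, 0) * ftilde (0, 0) ≠ 0 := by simpa [pmul] using hf0
  have hθ0 : θ (0, 0) ≠ 0 := left_ne_zero_of_mul h00
  have hf00 : ftilde ≠ 0 := fun h => right_ne_zero_of_mul h00 (by simp [h])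
  set c : ℂ := (starRingEnd ℂ) (θ (0, 0)) with hc
  have hc0 : c ≠ 0 := by simpa [hc] using hθ0
  have hpr : p = c • (c⁻¹ • p) := by rw [smul_smul, mul_inv_cancel₀ hc0, one_smul]
  have hr : inPn n (c⁻¹ • p) := hp.1.smul' _
  have hopa : IsOPA ftilde n (c⁻¹ • p) := by
    refine ⟨hr, fun s hs => (Hnorm_le_iff _ _).2 ?_⟩
    have h1 := (Hnorm_le_iff _ _).1 (hp.2 (c • s) (hs.smul' c))
    rw [hpr, hc, key θ ftilde hft hiso n s hs, ← hc, key θ ftilde hft hiso n _ hr] at h1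
    have hpos : 0 < ‖θ (0, 0)‖ ^ 2 := by positivity
    have h2 := le_of_mul_le_mul_left (by linarith :
      ‖θ (0, 0)‖ ^ 2 * (Hsq (pmul (c⁻¹ • p) ftilde - oneH) - 1)
        ≤ ‖θ (0, 0)‖ ^ 2 * (Hsq (pmul s ftilde - oneH) - 1)) hpos
    linarith
  exact ⟨c, by rw [← opa_unique hft hf00 hopa hq]; exact hpr⟩
end
end

section
/- Let f ∈ H²(𝔻²) with f(0) ≠ 0 and let n ≥ 0. Suppose p_n*[f] = q + r where q, r ∈ P_n, r(0) = 0, and ⟨qf, rf⟩ = 0. Then r ≡ 0 and p_n*[f] = q. -/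
noncomputable section

open Finset

lemma memH2_iff (f : Coef) : MemH2 f ↔ Memℓp f 2 := by
  rw [memℓp_gen_iff (by norm_num)]
  simp [MemH2]

lemma memH2_shift (f : Coef) (hf : MemH2 f) (c : ℂ) (ab : ℕ × ℕ) :
    MemH2 (fun jk => if ab.1 ≤ jk.1 ∧ ab.2 ≤ jk.2 then
      c * f (jk.1 - ab.1, jk.2 - ab.2) else 0) := by
  unfold MemH2
  have hinj : Function.Injective (fun jk : ℕ × ℕ => (jk.1 + ab.1, jk.2 + ab.2)) := by
    rintro ⟨x, y⟩ ⟨x', y'⟩ h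
    simpa using h
  rw [← hinj.summable_iff]
  · have : Summable (fun jk => ‖c‖ ^ 2 * ‖f jk‖ ^ 2) := Summable.mul_left _ hf
    refine this.congr ?_
    rintro ⟨x, y⟩
    simp [mul_pow]
  · rintro ⟨x, y⟩ h
    have : ¬ (ab.1 ≤ x ∧ ab.2 ≤ y) := by
      rintro ⟨h1, h2⟩
      exact h ⟨(x - ab.1, y - ab.2), by simp [h1, h2]⟩
    simp [this]

lemma pmul_eq (n : ℕ) (q f : Coef) (hq : inPn n q) :
    pmul q f = ∑ ab ∈ (range (n + 1)).image chi,
      (fun jk : ℕ × ℕ => if ab.1 ≤ jk.1 ∧ ab.2 ≤ jk.2 then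
        q ab * f (jk.1 - ab.1, jk.2 - ab.2) else 0) := by
  funext jk
  rw [Finset.sum_apply, ← Finset.sum_filter, pmul,
    ← Finset.sum_product' (range (jk.1 + 1)) (range (jk.2 + 1))
      (fun a b => q (a, b) * f (jk.1 - a, jk.2 - b))]
  symm
  apply Finset.sum_subset
  · intro ab h
    simp only [Finset.mem_filter, Finset.mem_product, Finset.mem_range] at h ⊢
    omega
  · intro ab h h'
    simp only [Finset.mem_filter, Finset.mem_product, Finset.mem_range] at h h'
    by_cases h0 : q ab = 0
    · simp [h0]
    · obtain ⟨k, hk, hk'⟩ := hq ab h0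
      exact absurd ⟨Finset.mem_image.2 ⟨k, by simpa using Nat.lt_succ_of_le hk, hk'⟩,
        by omega, by omega⟩ h'

lemma memH2_pmul (n : ℕ) (q f : Coef) (hf : MemH2 f) (hq : inPn n q) : MemH2 (pmul q f) := by
  rw [pmul_eq n q f hq, memH2_iff]
  refine Finset.sum_induction _ (fun g : Coef => Memℓp g 2) (fun a b ha hb => ha.add hb)
    zero_memℓp ?_
  intro ab _
  exact (memH2_iff _).1 (memH2_shift f hf _ ab)

lemma eq_zero_of_pmul (r f : Coef) (hf0 : f (0, 0) ≠ 0) (h : pmul r f = 0) : r = 0 := by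
  have key : ∀ m : ℕ, ∀ a b : ℕ, a + b = m → r (a, b) = 0 := by
    intro m
    induction m using Nat.strong_induction_on with
    | _ m ih =>
      intro a b hab
      have h1 := congrFun h (a, b)
      simp only [pmul, Pi.zero_apply] at h1
      rw [← Finset.sum_product' (range (a + 1)) (range (b + 1))
        (fun x y => r (x, y) * f (a - x, b - y)),
        Finset.sum_eq_single (a, b)] at h1
      · simpa [hf0] using h1
      · rintro ⟨x, y⟩ hx hne
        simp only [Finset.mem_product, Finset.mem_range] at hx
        have : ¬ (x = a ∧ y = b) := by simpa using hne
        rw [ih (x + y) (by omega) x y rfl, zero_mul]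
      · intro h
        simp at h
  funext ⟨a, b⟩
  exact key _ a b rfl

lemma pmul_add' (q r f : Coef) : pmul (q + r) f = pmul q f + pmul r f := by
  funext jk
  simp [pmul, add_mul, Finset.sum_add_distrib]

lemma summable_inner (A R : Coef) (hA : MemH2 A) (hR : MemH2 R) :
    Summable (fun jk => A jk * (starRingEnd ℂ) (R jk)) := by
  refine Summable.of_norm_bounded (hA.add hR) ?_
  intro jk
  simp only [norm_mul, RCLike.norm_conj]
  nlinarith [sq_nonneg (‖A jk‖ - ‖R jk‖), sq_nonneg (‖A jk‖), sq_nonneg (‖R jk‖)]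

/-- If `f ∈ H²(𝔻²)` with `f(0) ≠ 0` and `p_n*[f] = q + r` with
`q, r ∈ P_n`, `r(0) = 0`, and `⟨qf, rf⟩ = 0`, then `r ≡ 0` and `p_n*[f] = q`. -/
theorem statement8 (f : Coef) (hf : MemH2 f) (hf0 : f (0, 0) ≠ 0) (n : ℕ)
    (p q r : Coef) (hp : IsOPA f n p) (hq : inPn n q) (hr : inPn n r)
    (hsum : p = q + r) (hr0 : r (0, 0) = 0)
    (hperp : Hinner (pmul q f) (pmul r f) = 0) :
    r = 0 ∧ p = q := by
  have hA := memH2_pmul n q f hf hq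
  have hR := memH2_pmul n r f hf hr
  have hR0 : pmul r f (0, 0) = 0 := by simp [pmul, hr0]
  have hle := hp.2 q hq
  rw [hsum, pmul_add'] at hle
  generalize hAe : pmul q f = A at *
  have hRf : pmul r f = 0 := by
    generalize pmul r f = R at *
    have hA1 : MemH2 (A - oneH) :=
      (memH2_iff _).2 (((memH2_iff _).1 hA).sub ((memH2_iff _).1 memH2_oneH))
    have hS := summable_inner A R hA hR
    have hre : HasSum (fun jk => (A jk * (starRingEnd ℂ) (R jk)).re) 0 := by
      have h2 := hS.hasSum
      rw [show (∑' jk, A jk * (starRingEnd ℂ) (R jk)) = 0 from hperp] at h2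
      simpa using Complex.hasSum_re h2
    have hpt : ∀ jk, ‖(A + R - oneH) jk‖ ^ 2 = ‖(A - oneH) jk‖ ^ 2 + ‖R jk‖ ^ 2
        + 2 * (A jk * (starRingEnd ℂ) (R jk)).re := by
      intro jk
      simp only [← Complex.normSq_eq_norm_sq, Complex.normSq_apply, Pi.add_apply, Pi.sub_apply,
        Complex.add_re, Complex.sub_re, Complex.add_im, Complex.sub_im, Complex.mul_re,
        Complex.conj_re, Complex.conj_im]
      by_cases h : jk = (0, 0)
      · rw [h, hR0]; simp
      · simp [oneH, h]; ring
    have hsumm := (hA1.hasSum.add hR.hasSum).add (hre.mul_left 2)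
    have htot : (∑' jk, ‖(A + R - oneH) jk‖ ^ 2) =
        (∑' jk, ‖(A - oneH) jk‖ ^ 2) + ∑' jk, ‖R jk‖ ^ 2 := by
      rw [tsum_congr hpt, hsumm.tsum_eq]; ring
    unfold Hnorm at hle
    rw [Real.sqrt_le_sqrt_iff (tsum_nonneg fun _ => by positivity), htot] at hle
    funext jk
    have h3 := hR.le_tsum jk (fun _ _ => by positivity)
    have h4 : ‖R jk‖ ^ 2 ≤ 0 := by linarith
    have h5 : ‖R jk‖ = 0 := by nlinarith [norm_nonneg (R jk)]
    simpa using h5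
  have hr' := eq_zero_of_pmul r f hf0 hRf
  exact ⟨hr', by rw [hsum, hr', add_zero]⟩
end
end

section
/- Let M be a closed subspace of H²(𝔻²) that is shift invariant, i.e., z·g ∈ M and w·g ∈ M for every g ∈ M. Let φ be the orthogonal projection of the constant function 1 onto M. Then ⟨φ, z^a w^b φ⟩ = 0 for every pair of nonnegative integers (a,b) ≠ (0,0); that is, φ is weakly inner. -/
noncomputable section

open Finset

theorem pmul_mono_apply (a b : ℕ) (f : Coef) (j k : ℕ) :
    pmul (mono (a, b)) f (j, k) = if a ≤ j ∧ b ≤ k then f (j - a, k - b) else 0 := by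
  unfold pmul mono
  simp only [Prod.mk.injEq, ite_and, ite_mul, one_mul, zero_mul]
  simp [Finset.sum_ite_eq', Nat.lt_succ_iff]

theorem pmul_mono_mem (M : Set Coef)
    (hshift : ∀ g ∈ M, pmul (mono (1, 0)) g ∈ M ∧ pmul (mono (0, 1)) g ∈ M)
    (φ : Coef) (hφ : φ ∈ M) (a b : ℕ) : pmul (mono (a, b)) φ ∈ M := by
  induction a with
  | zero =>
    induction b with
    | zero =>
      have : pmul (mono (0, 0)) φ = φ := by
        funext ⟨j, k⟩
        simp [pmul_mono_apply]
      rwa [this]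
    | succ b ih =>
      have : pmul (mono (0, b + 1)) φ = pmul (mono (0, 1)) (pmul (mono (0, b)) φ) := by
        funext ⟨j, k⟩
        simp only [pmul_mono_apply]
        have : k - (b + 1) = k - 1 - b := by omega
        rw [this]
        split_ifs <;> first | rfl | omega
      rw [this]
      exact (hshift _ ih).2
  | succ a ih =>
    have : pmul (mono (a + 1, b)) φ = pmul (mono (1, 0)) (pmul (mono (a, b)) φ) := by
      funext ⟨j, k⟩
      simp only [pmul_mono_apply]
      have : j - (a + 1) = j - 1 - a := by omega
      rw [this]
      split_ifs <;> first | rfl | omega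
    rw [this]
    exact (hshift _ ih).1

/-- Let `M ⊆ H²(𝔻²)` be a shift-invariant subspace and let `φ` be the
orthogonal projection of the constant function `1` onto `M` (i.e. `φ ∈ M` and `1 - φ ⊥ M`).
Then `⟨φ, z^a w^b φ⟩ = 0` for every `(a, b) ≠ (0, 0)`; that is, `φ` is weakly inner. -/
theorem statement14 (M : Set Coef) (hmem : ∀ g ∈ M, MemH2 g)
    (hzero : (0 : Coef) ∈ M)
    (hadd : ∀ g ∈ M, ∀ g' ∈ M, g + g' ∈ M)
    (hsmul : ∀ c : ℂ, ∀ g ∈ M, c • g ∈ M)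
    (hshift : ∀ g ∈ M, pmul (mono (1, 0)) g ∈ M ∧ pmul (mono (0, 1)) g ∈ M)
    (φ : Coef) (hφ : φ ∈ M) (hproj : ∀ g ∈ M, Hinner (oneH - φ) g = 0) :
    ∀ a b : ℕ, (a, b) ≠ (0, 0) → Hinner φ (pmul (mono (a, b)) φ) = 0 := by
  intro a b hab
  have hg := pmul_mono_mem M hshift φ hφ a b
  have h0 : pmul (mono (a, b)) φ (0, 0) = 0 := by
    rw [pmul_mono_apply, if_neg]
    rintro ⟨h1, h2⟩
    exact hab (by simp_all)
  have h := hproj _ hg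
  have e : Hinner (oneH - φ) (pmul (mono (a, b)) φ) = - Hinner φ (pmul (mono (a, b)) φ) := by
    unfold Hinner
    rw [← tsum_neg]
    congr 1
    funext i
    by_cases hi : i = (0, 0)
    · rw [hi, h0]; simp
    · simp [oneH, hi]
  rw [e] at h
  exact neg_eq_zero.mp h
end
end
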